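/- The n-th prime number p_n satisfies p_n \sim n \ln n, i.e., lim_{n\to\infty} p_n/(n \ln n) = 1. -/

import Mathlib

open Filter

namespace PNT
open MeasureTheory Set Topology

noncomputable def k (t : ℝ) : ℝ := max 0 (1 - |t|)

lemma k_cont : Continuous k := by unfold k; fun_prop
lemma k_nonneg (t : ℝ) : 0 ≤ k t := le_max_left _ _
lemma k_le_one (t : ℝ) : k t ≤ 1 := max_le zero_le_one (by linarith [abs_nonneg t])
lemma k_zero {t : ℝ} (h : 1 ≤ |t|) : k t = 0 := max_eq_left (by linarith)
lemma k_supp : HasCompactSupport k := by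
  refine HasCompactSupport.intro (isCompact_Icc (a := (-1:ℝ)) (b := 1)) fun t ht => k_zero ?_
  by_contra h
  push Not at h
  exact ht ⟨(abs_lt.1 h).1.le, (abs_lt.1 h).2.le⟩
lemma k_int : Integrable k := k_cont.integrable_of_hasCompactSupport k_supp

noncomputable def K (v : ℝ) : ℝ := ∫ t, k t * Real.cos (t * v)

lemma K_int_aux (v : ℝ) : Integrable (fun t => k t * Real.cos (t * v)) :=
  (k_cont.mul (by fun_prop)).integrable_of_hasCompactSupport k_supp.mul_right

lemma K_exp (v : ℝ) : ∫ t, (k t : ℂ) * Complex.exp (Complex.I * t * v) = K v := by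
  have hs : ∫ t, k t * Real.sin (t * v) = 0 := by
    have := integral_neg_eq_self (fun t => k t * Real.sin (t * v)) volume
    simp only [neg_mul, Real.sin_neg, mul_neg, integral_neg] at this
    have h2 : ∀ t, k (-t) = k t := fun t => by simp [k]
    simp only [h2] at this
    linarith
  have h1 : ∀ t : ℝ, (k t : ℂ) * Complex.exp (Complex.I * t * v) =
      ((k t * Real.cos (t * v) : ℝ) : ℂ) + ((k t * Real.sin (t * v) : ℝ) : ℂ) * Complex.I := by
    intro t
    rw [show Complex.I * t * v = ((t * v : ℝ) : ℂ) * Complex.I by push_cast; ring,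
      Complex.exp_mul_I]
    push_cast
    ring
  simp_rw [h1]
  rw [integral_add, integral_mul_const, integral_complex_ofReal, integral_complex_ofReal, hs]
  · simp [K]
  · exact (K_int_aux v).ofReal
  · refine Integrable.mul_const (Integrable.ofReal ?_) _
    exact (k_cont.mul (by fun_prop)).integrable_of_hasCompactSupport k_supp.mul_right

lemma K_formula {v : ℝ} (hv : v ≠ 0) : K v = 2 * (1 - Real.cos v) / v ^ 2 := by
  have h1 : K v = ∫ t in (-1:ℝ)..1, k t * Real.cos (t * v) := by
    rw [intervalIntegral.integral_of_le (by norm_num), K]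
    symm
    apply setIntegral_eq_integral_of_forall_compl_eq_zero
    intro t ht
    rw [k_zero, zero_mul]
    by_contra h
    push Not at h
    exact ht ⟨(abs_lt.1 h).1, (abs_lt.1 h).2.le⟩
  have hi : ∀ a b : ℝ, IntervalIntegrable (fun t => k t * Real.cos (t * v)) volume a b :=
    fun a b => (K_int_aux v).intervalIntegrable
  have h2 : ∫ t in (0:ℝ)..1, k t * Real.cos (t * v) = (1 - Real.cos v) / v ^ 2 := by
    have : ∫ t in (0:ℝ)..1, k t * Real.cos (t * v) = ∫ t in (0:ℝ)..1, (1 - t) * Real.cos (t * v) := by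
      apply intervalIntegral.integral_congr
      intro t ht
      rw [uIcc_of_le zero_le_one] at ht
      simp only [k, abs_of_nonneg ht.1]
      rw [max_eq_right (by linarith [ht.2])]
    rw [this, intervalIntegral.integral_eq_sub_of_hasDerivAt
      (f := fun t => (1 - t) * Real.sin (t * v) / v - Real.cos (t * v) / v ^ 2)]
    · field_simp; simp; ring
    · intro t _
      have e1 : HasDerivAt (fun t : ℝ => t * v) v t := by simpa using (hasDerivAt_id t).mul_const v
      have e2 := (((hasDerivAt_id t).const_sub 1).mul e1.sin).div_const v
      have e3 := e1.cos.div_const (v ^ 2)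
      refine (e2.sub e3).congr_deriv ?_
      simp only [id]; field_simp; ring
    · exact Continuous.intervalIntegrable (by fun_prop) _ _
  have h3 : ∫ t in (-1:ℝ)..0, k t * Real.cos (t * v) = ∫ t in (0:ℝ)..1, k t * Real.cos (t * v) := by
    have := intervalIntegral.integral_comp_neg (a := 0) (b := 1) (fun t => k t * Real.cos (t * v))
    simp only [neg_zero] at this
    rw [← this]
    congr 1
    ext t
    simp [k]
  rw [h1, ← intervalIntegral.integral_add_adjacent_intervals (hi (-1) 0) (hi 0 1), h3, h2]
  ring

lemma K_zero_pos : 0 < K 0 := by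
  have : K 0 = ∫ t, k t := by simp [K]
  rw [this]
  refine integral_pos_of_integrable_nonneg_nonzero (x := 0) k_cont k_int k_nonneg (by simp [k])

lemma K_nonneg (v : ℝ) : 0 ≤ K v := by
  rcases eq_or_ne v 0 with rfl | hv
  · exact K_zero_pos.le
  · rw [K_formula hv]
    have := Real.cos_le_one v
    have : 0 ≤ 1 - Real.cos v := by linarith
    positivity

lemma K_cont : Continuous K := by
  unfold K
  refine continuous_of_dominated (bound := k) ?_ ?_ k_int ?_
  · intro v; exact (K_int_aux v).aestronglyMeasurable
  · intro v
    refine Eventually.of_forall fun t => ?_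
    rw [norm_mul, Real.norm_of_nonneg (k_nonneg t)]
    exact mul_le_of_le_one_right (k_nonneg t) (Real.abs_cos_le_one _)
  · refine Eventually.of_forall fun t => ?_
    fun_prop

lemma K_bound : ∃ D : ℝ, ∀ v, K v ≤ D * (1 + v ^ 2)⁻¹ := by
  refine ⟨5, fun v => ?_⟩
  rw [← div_eq_mul_inv, le_div_iff₀ (by positivity)]
  rcases eq_or_ne v 0 with rfl | hv
  · have h0 : K 0 ≤ 5 := by
      have : ContinuousWithinAt K (Ioi 0) 0 := K_cont.continuousWithinAt
      refine le_of_tendsto this ?_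
      filter_upwards [self_mem_nhdsWithin] with v hv
      rw [K_formula (ne_of_gt hv), div_le_iff₀ (by have : (0:ℝ) < v := hv; positivity)]
      have := Real.one_sub_sq_div_two_le_cos (x := v)
      nlinarith [sq_nonneg v]
    simpa using h0
  · rw [K_formula hv, div_mul_eq_mul_div, div_le_iff₀ (by positivity)]
    have := Real.one_sub_sq_div_two_le_cos (x := v)
    have := Real.neg_one_le_cos v
    nlinarith [sq_nonneg v]

lemma K_int : Integrable K := by
  obtain ⟨D, hD⟩ := K_bound
  refine (integrable_inv_one_add_sq.const_mul D).mono' K_cont.aestronglyMeasurable ?_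
  exact Eventually.of_forall fun v => by rw [Real.norm_of_nonneg (K_nonneg v)]; exact hD v

lemma K_int_pos : 0 < ∫ v, K v :=
  integral_pos_of_integrable_nonneg_nonzero (x := 0) K_cont K_int K_nonneg K_zero_pos.ne'

end PNT


namespace PNT
open MeasureTheory Set Topology

section taub
variable {B : ℝ → ℝ} {C : ℝ} {g : ℂ → ℂ}

lemma expreal_int {σ : ℝ} (hσ : 0 < σ) : IntegrableOn (fun u : ℝ => Real.exp (-σ * u)) (Ioi 0) :=
  integrableOn_exp_mul_Ioi (by linarith) 0

lemma fubini_step {h : ℝ → ℝ} (hm : Measurable h) (hC : ∀ u, |h u| ≤ C)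
    (hlap : ∀ z : ℂ, 0 < z.re →
      ∫ u in Ioi (0:ℝ), (h u : ℂ) * Complex.exp (-z * u) = g z)
    {σ : ℝ} (hσ : 0 < σ) (l x : ℝ) :
    ∫ u in Ioi (0:ℝ), (h u : ℂ) * Real.exp (-σ * u) * K (l * (x - u)) =
      ∫ t : ℝ, (k t : ℂ) * Complex.exp (Complex.I * t * (l * x : ℝ)) * g (σ + Complex.I * l * t) := by
  have h1 : Integrable (fun u : ℝ => (h u : ℂ) * Real.exp (-σ * u)) (volume.restrict (Ioi 0)) := by
    refine Integrable.bdd_mul (c := C) (expreal_int hσ).ofReal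
      (Complex.measurable_ofReal.comp hm).aestronglyMeasurable ?_
    exact Eventually.of_forall fun u => by simpa using hC u
  have h2 : Integrable (Function.uncurry fun (u t : ℝ) =>
      ((h u : ℂ) * Real.exp (-σ * u)) * ((k t : ℂ) * Complex.exp (Complex.I * t * (l * (x - u) : ℝ))))
      ((volume.restrict (Ioi 0)).prod volume) := by
    have h3 := h1.mul_prod (k_int.ofReal (𝕜 := ℂ))
    have h4 : Integrable (fun p : ℝ × ℝ => Complex.exp (Complex.I * p.2 * (l * (x - p.1) : ℝ)) *
       (((h p.1 : ℂ) * Real.exp (-σ * p.1)) * (k p.2 : ℂ))) ((volume.restrict (Ioi 0)).prod volume) := by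
      refine Integrable.bdd_mul (c := 1) h3 (Continuous.aestronglyMeasurable (by fun_prop)) ?_
      refine Eventually.of_forall fun p => ?_
      rw [show Complex.I * p.2 * (l * (x - p.1) : ℝ) = ((p.2 * (l * (x - p.1)) : ℝ) : ℂ) * Complex.I by
        push_cast; ring, Complex.norm_exp_ofReal_mul_I]
    refine h4.congr (Eventually.of_forall fun p => ?_)
    simp only [Function.uncurry]
    ring
  have h5 : ∀ u : ℝ, (h u : ℂ) * Real.exp (-σ * u) * K (l * (x - u)) =
      ∫ t : ℝ, ((h u : ℂ) * Real.exp (-σ * u)) * ((k t : ℂ) * Complex.exp (Complex.I * t * (l * (x - u) : ℝ))) := by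
    intro u
    rw [← K_exp, integral_const_mul]
  simp_rw [h5]
  rw [integral_integral_swap h2]
  refine integral_congr_ae (Eventually.of_forall fun t => ?_)
  simp only
  rw [← hlap _ (by simpa using hσ), ← integral_const_mul]
  refine integral_congr_ae (Eventually.of_forall fun u => ?_)
  simp only
  have e : Complex.exp (Complex.I * t * (l * (x - u) : ℝ)) * Real.exp (-σ * u) =
    Complex.exp (Complex.I * t * (l * x : ℝ)) * Complex.exp (-(σ + Complex.I * l * t) * u) := by
    rw [Complex.ofReal_exp, ← Complex.exp_add, ← Complex.exp_add]
    congr 1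
    push_cast
    ring
  linear_combination (h u : ℂ) * k t * e

lemma K_scale_int {l : ℝ} (hl : 0 < l) : Integrable (fun v => K (l * v)) :=
  K_int.comp_mul_left' hl.ne'

lemma K_scale_int' {l : ℝ} (hl : 0 < l) (x : ℝ) : Integrable (fun u => K (l * (x - u))) :=
  (K_scale_int hl).comp_sub_left x

lemma limit_step {h : ℝ → ℝ} (hm : Measurable h) (hC : ∀ u, |h u| ≤ C)
    (hg : ContinuousOn g {z | 0 ≤ z.re})
    (hlap : ∀ z : ℂ, 0 < z.re →
      ∫ u in Ioi (0:ℝ), (h u : ℂ) * Complex.exp (-z * u) = g z)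
    {l : ℝ} (hl : 0 < l) (x : ℝ) :
    ∫ u in Ioi (0:ℝ), (h u : ℂ) * K (l * (x - u)) =
      ∫ t : ℝ, (k t : ℂ) * Complex.exp (Complex.I * t * (l * x : ℝ)) * g (Complex.I * l * t) := by
  let s : ℕ → ℝ := fun n => 1 / ((n:ℝ) + 1)
  have hs0 : ∀ n, 0 < s n := fun n => by simp only [s]; positivity
  have hs1 : ∀ n, s n ≤ 1 := fun n => by
    simp only [s]; rw [div_le_one (by positivity)]; linarith [Nat.cast_nonneg (α := ℝ) n]
  have hs : Tendsto s atTop (𝓝 0) := tendsto_one_div_add_atTop_nhds_zero_nat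
  have hC0 : 0 ≤ C := (abs_nonneg _).trans (hC 0)
  have L : Tendsto (fun n => ∫ u in Ioi (0:ℝ), (h u : ℂ) * Real.exp (-s n * u) * K (l * (x - u))) atTop
      (𝓝 (∫ u in Ioi (0:ℝ), (h u : ℂ) * K (l * (x - u)))) := by
    refine tendsto_integral_of_dominated_convergence (fun u => C * K (l * (x - u))) ?_ ?_ ?_ ?_
    · intro n
      refine AEStronglyMeasurable.mul (AEStronglyMeasurable.mul ?_ ?_) ?_
      · exact (Complex.measurable_ofReal.comp hm).aestronglyMeasurable
      · exact Continuous.aestronglyMeasurable (by fun_prop)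
      · have := K_cont
        exact Continuous.aestronglyMeasurable (by fun_prop)
    · exact ((K_scale_int' hl x).const_mul C).integrableOn
    · intro n
      refine (ae_restrict_iff' measurableSet_Ioi).2 (Eventually.of_forall fun u hu => ?_)
      have hu : 0 < u := hu
      rw [norm_mul, norm_mul, Complex.norm_real, Complex.norm_real, Complex.norm_real,
        Real.norm_of_nonneg (K_nonneg _), Real.norm_of_nonneg (Real.exp_pos _).le, Real.norm_eq_abs]
      refine mul_le_mul_of_nonneg_right ?_ (K_nonneg _)
      have : Real.exp (-s n * u) ≤ 1 := Real.exp_le_one_iff.2 (by nlinarith [hs0 n])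
      calc |h u| * Real.exp (-s n * u) ≤ C * 1 := mul_le_mul (hC u) this (Real.exp_pos _).le hC0
        _ = C := mul_one C
    · refine Eventually.of_forall fun u => ?_
      refine Tendsto.mul_const _ ?_
      have : Tendsto (fun n => Real.exp (-s n * u)) atTop (𝓝 1) := by
        have h1 : Tendsto (fun n => -s n * u) atTop (𝓝 0) := by
          simpa using (hs.neg.mul_const u)
        have h3 := (Real.continuous_exp.tendsto 0).comp h1
        rw [Real.exp_zero] at h3
        exact h3
      have h2 := ((Complex.continuous_ofReal.tendsto 1).comp this).const_mul (h u : ℂ)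
      simpa using h2
  have hS : IsCompact ((fun p : ℝ × ℝ => (p.1 : ℂ) + Complex.I * l * p.2) '' (Icc 0 1 ×ˢ Icc (-1) 1)) :=
    (isCompact_Icc.prod isCompact_Icc).image (by fun_prop)
  obtain ⟨M, hM⟩ := hS.exists_bound_of_continuousOn (f := g) (hg.mono (by
    rintro _ ⟨p, hp, rfl⟩
    simpa using hp.1.1))
  have hcg : ∀ σ : ℝ, 0 ≤ σ → Continuous (fun t : ℝ => g (σ + Complex.I * l * t)) := by
    intro σ hσ
    refine hg.comp_continuous (by fun_prop) fun t => by simpa using hσ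
  have R : Tendsto (fun n => ∫ t : ℝ, (k t : ℂ) * Complex.exp (Complex.I * t * (l * x : ℝ)) * g (s n + Complex.I * l * t)) atTop
      (𝓝 (∫ t : ℝ, (k t : ℂ) * Complex.exp (Complex.I * t * (l * x : ℝ)) * g (Complex.I * l * t))) := by
    refine tendsto_integral_of_dominated_convergence (fun t => k t * M) ?_ ?_ ?_ ?_
    · intro n
      have hk := k_cont
      exact ((Continuous.mul (by fun_prop) (by fun_prop)).mul (hcg _ (hs0 n).le)).aestronglyMeasurable
    · exact k_int.mul_const M
    · intro n
      refine Eventually.of_forall fun t => ?_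
      rw [norm_mul, norm_mul, Complex.norm_real, Real.norm_of_nonneg (k_nonneg t),
        show Complex.I * t * (l * x : ℝ) = ((t * (l * x) : ℝ) : ℂ) * Complex.I by
        push_cast; ring, Complex.norm_exp_ofReal_mul_I, mul_one]
      by_cases ht : |t| < 1
      · refine mul_le_mul_of_nonneg_left (hM _ ⟨(s n, t), ⟨⟨(hs0 n).le, hs1 n⟩, ?_⟩, rfl⟩) (k_nonneg t)
        exact ⟨(abs_lt.1 ht).1.le, (abs_lt.1 ht).2.le⟩
      · rw [k_zero (not_lt.1 ht)]; simp
    · refine Eventually.of_forall fun t => ?_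
      refine Tendsto.const_mul _ ?_
      have h0 : ContinuousWithinAt g {z | 0 ≤ z.re} (Complex.I * l * t) := hg _ (by simp)
      refine h0.tendsto.comp (tendsto_nhdsWithin_iff.2 ⟨?_, Eventually.of_forall fun n => ?_⟩)
      · have := ((Complex.continuous_ofReal.tendsto 0).comp hs).add_const (Complex.I * l * t)
        simpa using this
      · simpa using (hs0 n).le
  refine tendsto_nhds_unique (L.congr fun n => ?_) R
  exact fubini_step hm hC hlap (hs0 n) l x

lemma RL_step {h : ℝ → ℝ} (hm : Measurable h) (hC : ∀ u, |h u| ≤ C)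
    (hg : ContinuousOn g {z | 0 ≤ z.re})
    (hlap : ∀ z : ℂ, 0 < z.re →
      ∫ u in Ioi (0:ℝ), (h u : ℂ) * Complex.exp (-z * u) = g z)
    {l : ℝ} (hl : 0 < l) :
    Tendsto (fun x => ∫ u in Ioi (0:ℝ), h u * K (l * (x - u))) atTop (𝓝 0) := by
  have h1 := Real.tendsto_integral_exp_smul_cocompact (fun t : ℝ => (k t : ℂ) * g (Complex.I * l * t))
  have h2 : Tendsto (fun x : ℝ => -(l * x) / (2 * Real.pi)) atTop (cocompact ℝ) := by
    have : Tendsto (fun x : ℝ => -(l * x) / (2 * Real.pi)) atTop atBot := by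
      have := (tendsto_id (α := ℝ) (x := atTop)).const_mul_atTop_of_neg (r := -l / (2 * Real.pi))
        (div_neg_of_neg_of_pos (by linarith) (by positivity))
      refine this.congr fun x => ?_
      simp only [id]; ring
    rw [cocompact_eq_atBot_atTop]
    exact this.mono_right le_sup_left
  have h3 := h1.comp h2
  have h4 : Tendsto (fun x => ∫ u in Ioi (0:ℝ), (h u : ℂ) * K (l * (x - u))) atTop (𝓝 0) := by
    refine h3.congr fun x => ?_
    rw [limit_step hm hC hg hlap hl x]
    refine integral_congr_ae (Eventually.of_forall fun t => ?_)
    simp only [Circle.smul_def, Real.fourierChar_apply, smul_eq_mul]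
    have : ((2 * Real.pi * -(t * (-(l * x) / (2 * Real.pi))) : ℝ) : ℂ) * Complex.I =
       Complex.I * t * (l * x : ℝ) := by
      have : 2 * Real.pi * -(t * (-(l * x) / (2 * Real.pi))) = t * (l * x) := by
        field_simp
      rw [this]; push_cast; ring
    rw [this]; ring
  have h5 := (Complex.continuous_re.tendsto 0).comp h4
  simp only [Complex.zero_re] at h5
  refine h5.congr fun x => ?_
  have : ∀ u, (h u : ℂ) * K (l * (x - u)) = ((h u * K (l * (x - u)) : ℝ) : ℂ) := fun u => by push_cast; rfl
  simp only [Function.comp, this]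
  rw [integral_complex_ofReal, Complex.ofReal_re]

lemma K_mass {l : ℝ} (hl : 0 < l) :
    Tendsto (fun x => ∫ u in Ioi (0:ℝ), K (l * (x - u))) atTop (𝓝 (∫ v, K (l * v))) := by
  have h1 := tendsto_setIntegral_of_monotone (μ := volume) (s := fun x : ℝ => Iio x) (f := fun v => K (l * v))
    (fun x => measurableSet_Iio) (fun a b hab => Iio_subset_Iio hab) (K_scale_int hl).integrableOn
  rw [iUnion_Iio, setIntegral_univ] at h1
  refine h1.congr fun x => ?_
  have := (Measure.measurePreserving_sub_left volume x).setIntegral_preimage_emb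
    (measurableEmbedding_subLeft x) (fun v => K (l * v)) (Iio x)
  rw [← this]
  congr 2
  ext u; simp

lemma exists_scale {a δ : ℝ} (ha : 0 < a) (hδ : 0 < δ) :
    ∃ l : ℝ, 0 < l ∧ (1 - δ) * (∫ v, K (l * v)) ≤ ∫ v in Icc (-a) a, K (l * v) := by
  have h1 := intervalIntegral_tendsto_integral (μ := volume) K_int (tendsto_neg_atTop_atBot (G := ℝ)) tendsto_id
  have h2 : (1 - δ) * (∫ v, K v) < ∫ v, K v := by nlinarith [K_int_pos]
  obtain ⟨R, hR, hR0⟩ := ((h1.eventually_const_lt h2).and (eventually_gt_atTop 0)).exists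
  refine ⟨R / a, by positivity, ?_⟩
  have hl : 0 < R / a := by positivity
  rw [Measure.integral_comp_mul_left, integral_Icc_eq_integral_Ioc,
    ← intervalIntegral.integral_of_le (by linarith), intervalIntegral.integral_comp_mul_left _ hl.ne']
  rw [abs_of_pos (by positivity), show R / a * -a = -R by field_simp, show R / a * a = R by field_simp]
  simp only [smul_eq_mul]
  simp only [id] at hR
  have : 0 < (R / a)⁻¹ := by positivity
  nlinarith

theorem tauber (hm : Measurable B) (hB0 : ∀ u, 0 ≤ B u) (hBC : ∀ u, B u ≤ C)
    (hmono : ∀ u v, u ≤ v → B u * Real.exp u ≤ B v * Real.exp v)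
    (hg : ContinuousOn g {z | 0 ≤ z.re})
    (hlap : ∀ z : ℂ, 0 < z.re →
      ∫ u in Ioi (0:ℝ), ((B u - 1 : ℝ) : ℂ) * Complex.exp (-z * u) = g z) :
    Tendsto B atTop (𝓝 1) := by
  have hC0 : 0 ≤ C := (hB0 0).trans (hBC 0)
  have hBK : ∀ {l : ℝ}, 0 < l → ∀ x, Integrable (fun u => B u * K (l * (x - u))) := by
    intro l hl x
    refine Integrable.bdd_mul (c := C) (K_scale_int' hl x) hm.aestronglyMeasurable ?_
    exact Eventually.of_forall fun u => by
      rw [Real.norm_of_nonneg (hB0 u)]; exact hBC u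
  have hM : ∀ {l : ℝ}, 0 < l → Tendsto (fun x => ∫ u in Ioi (0:ℝ), B u * K (l * (x - u))) atTop
      (𝓝 (∫ v, K (l * v))) := by
    intro l hl
    have h1 := RL_step (h := fun u => B u - 1) (C := C + 1) (hm.sub_const 1) (fun u => by
      rw [abs_le]; constructor <;> linarith [hB0 u, hBC u]) hg hlap hl
    have h2 := h1.add (K_mass hl)
    rw [zero_add] at h2
    refine h2.congr fun x => ?_
    rw [← integral_add]
    · congr 1; ext u; ring
    · have : (fun u => (B u - 1) * K (l * (x - u))) = fun u => B u * K (l * (x - u)) - K (l * (x - u)) := by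
        ext u; ring
      rw [this]
      exact ((hBK hl x).sub (K_scale_int' hl x)).integrableOn
    · exact (K_scale_int' hl x).integrableOn
  have hJ : ∀ {l : ℝ}, 0 < l → 0 < ∫ v, K (l * v) := by
    intro l hl
    rw [Measure.integral_comp_mul_left, smul_eq_mul]
    exact mul_pos (by positivity) K_int_pos
  have hW : ∀ (l a x : ℝ), ∫ u in Icc (x - a) (x + a), K (l * (x - u)) = ∫ v in Icc (-a) a, K (l * v) := by
    intro l a x
    have := (Measure.measurePreserving_sub_left volume x).setIntegral_preimage_emb
      (measurableEmbedding_subLeft x) (fun v => K (l * v)) (Icc (-a) a)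
    rw [← this]
    congr 2
    ext u; simp
  -- window bounds
  have upper : ∀ {l a x : ℝ}, 0 < l → 0 < a → a < x →
      B (x - a) * Real.exp (-(2 * a)) * (∫ v in Icc (-a) a, K (l * v)) ≤
        ∫ u in Ioi (0:ℝ), B u * K (l * (x - u)) := by
    intro l a x hl ha hx
    rw [← hW l a x, ← integral_const_mul]
    calc _ ≤ ∫ u in Icc (x - a) (x + a), B u * K (l * (x - u)) := by
          refine setIntegral_mono_on ((K_scale_int' hl x).integrableOn.const_mul _) (hBK hl x).integrableOn
            measurableSet_Icc fun u hu => mul_le_mul_of_nonneg_right ?_ (K_nonneg _)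
          have h1 := hmono _ _ hu.1
          have h2 : B u * Real.exp u ≤ B u * Real.exp (x + a) :=
            mul_le_mul_of_nonneg_left (Real.exp_le_exp.2 hu.2) (hB0 u)
          have h3 := h1.trans h2
          rw [← mul_le_mul_iff_left₀ (Real.exp_pos (x + a)), mul_assoc, ← Real.exp_add]
          rwa [show -(2 * a) + (x + a) = x - a by ring]
      _ ≤ _ := by
          refine setIntegral_mono_set (hBK hl x).integrableOn ?_ ?_
          · exact Eventually.of_forall fun u => mul_nonneg (hB0 u) (K_nonneg _)
          · refine (show Icc (x - a) (x + a) ⊆ Ioi 0 from fun u hu => ?_).eventuallyLE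
            have := hu.1
            simp only [mem_Ioi]; linarith
  have lower : ∀ {l a x : ℝ}, 0 < l → 0 < a → a < x →
      (∫ u in Ioi (0:ℝ), B u * K (l * (x - u))) ≤
      B (x + a) * Real.exp (2 * a) * (∫ v in Icc (-a) a, K (l * v)) +
       C * ((∫ v, K (l * v)) - ∫ v in Icc (-a) a, K (l * v)) := by
    intro l a x hl ha hx
    calc _ ≤ ∫ u, B u * K (l * (x - u)) := by
          refine setIntegral_le_integral (hBK hl x) ?_
          exact Eventually.of_forall fun u => mul_nonneg (hB0 u) (K_nonneg _)
      _ = (∫ u in Icc (x - a) (x + a), B u * K (l * (x - u))) +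
          ∫ u in (Icc (x - a) (x + a))ᶜ, B u * K (l * (x - u)) :=
          (integral_add_compl measurableSet_Icc (hBK hl x)).symm
      _ ≤ _ := by
          refine add_le_add ?_ ?_
          · rw [← hW l a x, ← integral_const_mul]
            refine setIntegral_mono_on (hBK hl x).integrableOn ((K_scale_int' hl x).integrableOn.const_mul _)
              measurableSet_Icc fun u hu => mul_le_mul_of_nonneg_right ?_ (K_nonneg _)
            have h1 := hmono _ _ hu.2
            have h2 : B u * Real.exp (x - a) ≤ B u * Real.exp u :=
              mul_le_mul_of_nonneg_left (Real.exp_le_exp.2 hu.1) (hB0 u)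
            have h3 := h2.trans h1
            rw [← mul_le_mul_iff_left₀ (Real.exp_pos (x - a)), mul_assoc, ← Real.exp_add]
            rwa [show 2 * a + (x - a) = x + a by ring]
          · have e : (∫ v, K (l * v)) = ∫ u, K (l * (x - u)) :=
              (integral_sub_left_eq_self (fun v => K (l * v)) volume x).symm
            rw [e, ← hW l a x, ← setIntegral_compl measurableSet_Icc (K_scale_int' hl x),
              ← integral_const_mul]
            exact setIntegral_mono_on (hBK hl x).integrableOn ((K_scale_int' hl x).integrableOn.const_mul _)
              measurableSet_Icc.compl fun u _ => mul_le_mul_of_nonneg_right (hBC u) (K_nonneg _)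
  rw [tendsto_order]
  constructor
  · intro b hb
    have t1 : Tendsto (fun a : ℝ => Real.exp (-(2 * a)) * (1 - a - C * a)) (𝓝[>] 0) (𝓝 1) := by
      have : Continuous (fun a : ℝ => Real.exp (-(2 * a)) * (1 - a - C * a)) := by fun_prop
      have := this.tendsto 0
      simp at this
      exact this.mono_left nhdsWithin_le_nhds
    obtain ⟨a, hab, ha⟩ := ((t1.eventually_const_lt hb).and self_mem_nhdsWithin).exists
    have ha : 0 < a := ha
    obtain ⟨l, hl, hlW⟩ := exists_scale ha ha
    have hJl := hJ hl
    have hWJ : ∫ v in Icc (-a) a, K (l * v) ≤ ∫ v, K (l * v) :=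
      setIntegral_le_integral (K_scale_int hl) (Eventually.of_forall fun v => K_nonneg _)
    have ev : ∀ᶠ x in atTop, (1 - a) * (∫ v, K (l * v)) < ∫ u in Ioi (0:ℝ), B u * K (l * (x - u)) :=
      (hM hl).eventually_const_lt (by nlinarith)
    have ev2 : ∀ᶠ x in atTop, b < B (x + a) := by
      filter_upwards [ev, eventually_gt_atTop a] with x hx hxa
      have h1 := lower hl ha hxa
      set J := ∫ v, K (l * v)
      set W := ∫ v in Icc (-a) a, K (l * v)
      have hE := Real.exp_pos (2 * a)
      have h2 : B (x + a) * Real.exp (2 * a) * W ≤ B (x + a) * Real.exp (2 * a) * J :=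
        mul_le_mul_of_nonneg_left hWJ (mul_nonneg (hB0 _) hE.le)
      have h3 : C * (J - W) ≤ C * (a * J) := mul_le_mul_of_nonneg_left (by linarith) hC0
      have h4 : (1 - a - C * a) * J < (B (x + a) * Real.exp (2 * a)) * J := by linarith
      have h5 := lt_of_mul_lt_mul_right h4 hJl.le
      have h6 : Real.exp (-(2 * a)) * (1 - a - C * a) < Real.exp (-(2*a)) * (B (x + a) * Real.exp (2 * a)) :=
        mul_lt_mul_of_pos_left h5 (Real.exp_pos _)
      have h7 : Real.exp (-(2*a)) * (B (x + a) * Real.exp (2 * a)) = B (x + a) := by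
        rw [mul_left_comm, ← Real.exp_add]; simp
      linarith
    have := (tendsto_atTop_add_const_right atTop (-a) tendsto_id).eventually ev2
    simpa using this
  · intro b hb
    have t1 : Tendsto (fun a : ℝ => Real.exp (2 * a) * (1 + a) / (1 - a)) (𝓝[>] 0) (𝓝 1) := by
      have : ContinuousAt (fun a : ℝ => Real.exp (2 * a) * (1 + a) / (1 - a)) 0 :=
        ContinuousAt.div (by fun_prop) (by fun_prop) (by norm_num)
      have := this.tendsto
      simp at this
      exact this.mono_left nhdsWithin_le_nhds
    have t2 : ∀ᶠ a : ℝ in 𝓝[>] 0, a < 1 :=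
      (eventually_lt_nhds (by norm_num)).filter_mono nhdsWithin_le_nhds
    obtain ⟨a, ⟨hab, ha1⟩, ha⟩ := (((t1.eventually_lt_const hb).and t2).and self_mem_nhdsWithin).exists
    have ha : 0 < a := ha
    obtain ⟨l, hl, hlW⟩ := exists_scale ha ha
    have hJl := hJ hl
    have ev : ∀ᶠ x in atTop, ∫ u in Ioi (0:ℝ), B u * K (l * (x - u)) < (1 + a) * (∫ v, K (l * v)) :=
      (hM hl).eventually_lt_const (by nlinarith)
    have ev2 : ∀ᶠ x in atTop, B (x - a) < b := by
      filter_upwards [ev, eventually_gt_atTop a] with x hx hxa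
      have h1 := upper hl ha hxa
      set J := ∫ v, K (l * v)
      set W := ∫ v in Icc (-a) a, K (l * v)
      have h2 := mul_le_mul_of_nonneg_left hlW (mul_nonneg (hB0 (x - a)) (Real.exp_pos (-(2 * a))).le)
      have h4 : (B (x - a) * Real.exp (-(2 * a)) * (1 - a)) * J < (1 + a) * J := by linarith
      have h5 := lt_of_mul_lt_mul_right h4 hJl.le
      refine lt_trans ?_ hab
      rw [lt_div_iff₀ (by linarith)]
      have h6 := mul_lt_mul_of_pos_left h5 (Real.exp_pos (2 * a))
      have h7 : Real.exp (2 * a) * (B (x - a) * Real.exp (-(2 * a)) * (1 - a)) = B (x - a) * (1 - a) := by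
        have : Real.exp (2 * a) * Real.exp (-(2 * a)) = 1 := by rw [← Real.exp_add]; simp
        linear_combination B (x - a) * (1 - a) * this
      linarith
    have := (tendsto_atTop_add_const_right atTop a tendsto_id).eventually ev2
    simpa using this
end taub
end PNT

namespace PNT
open MeasureTheory Set Topology ArithmeticFunction Chebyshev

noncomputable def G (s : ℂ) : ℂ := vonMangoldt.LFunctionResidueClassAux (1 : ZMod 1) s

lemma G_cont : ContinuousOn G {s | 1 ≤ s.re} :=
  vonMangoldt.continuousOn_LFunctionResidueClassAux (1 : ZMod 1)

lemma G_eq {s : ℂ} (hs : 1 < s.re) : LSeries (fun n => (vonMangoldt n : ℂ)) s = G s + 1 / (s - 1) := by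
  have := vonMangoldt.eqOn_LFunctionResidueClassAux (q := 1) (a := 1) isUnit_one hs
  have e : ∀ n, vonMangoldt.residueClass (1 : ZMod 1) n = vonMangoldt n := by
    intro n
    simp [vonMangoldt.residueClass, Subsingleton.elim _ (1 : ZMod 1)]
  simp only [e] at this
  rw [G, this]
  simp

lemma psi_lap {s : ℂ} (hs : 1 < s.re) :
    LSeries (fun n => (vonMangoldt n : ℂ)) s =
      s * ∫ u in Ioi (0:ℝ), ((psi (Real.exp u) * Real.exp (-u) : ℝ) : ℂ) * Complex.exp (-(s - 1) * u) := by
  have h := LSeries_eq_mul_integral_of_nonneg (fun n => vonMangoldt n) zero_le_one hs ?_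
    (fun n => vonMangoldt_nonneg)
  · rw [h]
    congr 1
    have him : Real.exp '' (Ioi 0) = Ioi 1 := by
      ext y
      constructor
      · rintro ⟨x, hx, rfl⟩
        exact Real.one_lt_exp_iff.2 hx
      · intro hy
        exact ⟨Real.log y, Real.log_pos hy, Real.exp_log (lt_trans zero_lt_one hy)⟩
    rw [← him, integral_image_eq_integral_abs_deriv_smul measurableSet_Ioi
      (fun x _ => (Real.hasDerivAt_exp x).hasDerivWithinAt) Real.exp_injective.injOn]
    refine setIntegral_congr_fun measurableSet_Ioi fun u _ => ?_
    simp only [abs_of_pos (Real.exp_pos u), psi, Complex.real_smul]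
    have hI : Finset.Icc 1 ⌊Real.exp u⌋₊ = Finset.Ioc 0 ⌊Real.exp u⌋₊ := by
      ext; simp [Nat.succ_le_iff]
    rw [hI]
    have hp : ((Real.exp u : ℝ) : ℂ) ^ (-(s + 1)) = Complex.exp (-(s+1) * u) := by
      rw [Complex.cpow_def_of_ne_zero (by exact_mod_cast (Real.exp_pos u).ne'),
        ← Complex.ofReal_log (Real.exp_pos u).le, Real.log_exp]
      congr 1; ring
    rw [hp]
    push_cast
    rw [mul_left_comm, mul_assoc, ← Complex.exp_add, ← Complex.exp_add]
    congr 2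
    ring
  · refine Asymptotics.IsBigO.of_bound (Real.log 4 + 4) ?_
    filter_upwards with n
    have := psi_le_const_mul_self (x := n) (by positivity)
    rw [psi, Nat.floor_natCast] at this
    have hI : Finset.Icc 1 n = Finset.Ioc 0 n := by
      ext; simp [Nat.succ_le_iff]
    rw [hI, Real.rpow_one, Real.norm_of_nonneg (Finset.sum_nonneg fun _ _ => vonMangoldt_nonneg),
      Real.norm_of_nonneg (by positivity)]
    exact this

noncomputable def B (u : ℝ) : ℝ := psi (Real.exp u) * Real.exp (-u)

lemma B_meas : Measurable B :=
  (psi_mono.measurable.comp Real.measurable_exp).mul (by fun_prop)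
lemma B_nonneg (u : ℝ) : 0 ≤ B u := mul_nonneg (psi_nonneg _) (Real.exp_pos _).le
lemma B_le (u : ℝ) : B u ≤ Real.log 4 + 4 := by
  have := psi_le_const_mul_self (Real.exp_pos u).le
  rw [B, Real.exp_neg, ← div_eq_mul_inv]
  exact (div_le_iff₀ (Real.exp_pos u)).2 this
lemma B_mono (u v : ℝ) (h : u ≤ v) : B u * Real.exp u ≤ B v * Real.exp v := by
  simp only [B, mul_assoc, ← Real.exp_add, neg_add_cancel, Real.exp_zero, mul_one]
  exact psi_mono (Real.exp_le_exp.2 h)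

lemma exp_integrable {z : ℂ} (hz : 0 < z.re) :
    IntegrableOn (fun u : ℝ => Complex.exp (-z * u)) (Ioi 0) :=
  integrableOn_exp_mul_complex_Ioi (by simpa using hz) 0

lemma B_lap {z : ℂ} (hz : 0 < z.re) :
    ∫ u in Ioi (0:ℝ), ((B u - 1 : ℝ) : ℂ) * Complex.exp (-z * u) = (G (1 + z) - 1) / (1 + z) := by
  have h1 := psi_lap (s := 1 + z) (by simpa using hz)
  rw [G_eq (by simpa using hz)] at h1
  have hz0 : z ≠ 0 := by rintro rfl; simp at hz
  have hz1 : 1 + z ≠ 0 := by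
    intro h
    have := congrArg Complex.re h
    simp at this
    linarith
  have h2 : ∫ u in Ioi (0:ℝ), Complex.exp (-z * u) = 1 / z := by
    rw [integral_exp_mul_complex_Ioi (by simpa using hz)]
    simp [neg_div_neg_eq]
  have hBi : IntegrableOn (fun u : ℝ => (B u : ℂ) * Complex.exp (-z * u)) (Ioi 0) := by
    refine Integrable.bdd_mul (c := Real.log 4 + 4) (exp_integrable hz)
      (Complex.measurable_ofReal.comp B_meas).aestronglyMeasurable ?_
    exact Eventually.of_forall fun u => by
      simpa [abs_of_nonneg (B_nonneg u)] using B_le u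
  simp only [add_sub_cancel_left] at h1
  change _ = (1 + z) * ∫ u in Ioi (0:ℝ), (B u : ℂ) * Complex.exp (-z * u) at h1
  have h3 : ∀ u : ℝ, ((B u - 1 : ℝ) : ℂ) * Complex.exp (-z * u) =
    (B u : ℂ) * Complex.exp (-z * u) - Complex.exp (-z * u) := by
    intro u; push_cast; ring
  simp_rw [h3]
  rw [integral_sub hBi (exp_integrable hz), h2]
  generalize (∫ u in Ioi (0:ℝ), (B u : ℂ) * Complex.exp (-z * u)) = X at *
  rw [eq_div_iff hz1, sub_mul, mul_comm X, ← h1]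
  field_simp
  ring

end PNT

namespace PNT
open MeasureTheory Set Topology ArithmeticFunction Chebyshev
lemma final_step (h : Tendsto (fun x => psi x / x) atTop (𝓝 1)) :
    Tendsto (fun n : ℕ => (Nat.nth Nat.Prime n : ℝ) / (n * Real.log n))
      atTop (nhds 1) := by
  -- theta
  have hθ : Tendsto (fun x => theta x / x) atTop (𝓝 1) := by
    have h1 : Tendsto (fun x : ℝ => (psi x - theta x) / x) atTop (𝓝 0) := by
      have : (fun x : ℝ => √x) =o[atTop] (fun x => x) := by
        refine (Asymptotics.isLittleO_iff_tendsto' ?_).2 ?_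
        · filter_upwards with x hx
          simp [hx]
        · simp only [Real.sqrt_div_self]
          simpa only [one_div] using! Real.tendsto_sqrt_atTop.inv_tendsto_atTop
      exact (isBigO_psi_sub_theta_sqrt.trans_isLittleO this).tendsto_div_nhds_zero
    have := h.sub h1
    simp only [sub_zero] at this
    refine this.congr fun x => ?_
    ring
  -- pi
  have hπ : Tendsto (fun x : ℝ => (Nat.primeCounting ⌊x⌋₊ : ℝ) * Real.log x / x) atTop (𝓝 1) := by
    have h1 := integral_theta_div_log_sq_isLittleO.tendsto_div_nhds_zero
    have := hθ.add h1
    simp only [add_zero] at this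
    refine this.congr' ?_
    filter_upwards [eventually_ge_atTop 2] with x hx
    rw [primeCounting_eq_theta_div_log_add_integral hx]
    have : 0 < Real.log x := Real.log_pos (by linarith)
    field_simp
  have hp : Tendsto (fun n : ℕ => (Nat.nth Nat.Prime n : ℝ)) atTop atTop :=
    tendsto_natCast_atTop_atTop.comp (Nat.nth_strictMono Nat.infinite_setOfPred_prime).tendsto_atTop
  have hc : ∀ n : ℕ, Nat.primeCounting (Nat.nth Nat.Prime n) = n + 1 := by
    intro n
    rw [Nat.primeCounting, Nat.primeCounting', Nat.count_succ, ← Nat.primeCounting',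
      Nat.primeCounting'_nth_eq, if_pos (Nat.prime_nth_prime n)]
  have h1 : Tendsto (fun n : ℕ => ((n:ℝ) + 1) * Real.log (Nat.nth Nat.Prime n) / (Nat.nth Nat.Prime n)) atTop (𝓝 1) := by
    refine (hπ.comp hp).congr fun n => ?_
    simp [hc]
  have hn1 : Tendsto (fun n : ℕ => (n:ℝ) / ((n:ℝ) + 1)) atTop (𝓝 1) :=
    tendsto_natCast_div_add_atTop (1:ℝ)
  have h2 : Tendsto (fun n : ℕ => (n:ℝ) * Real.log (Nat.nth Nat.Prime n) / (Nat.nth Nat.Prime n)) atTop (𝓝 1) := by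
    have := hn1.mul h1
    rw [one_mul] at this
    refine this.congr fun n => ?_
    have : (n:ℝ) + 1 ≠ 0 := by positivity
    field_simp
  -- logs
  have hlp := Real.tendsto_log_atTop.comp hp
  have h3 : Tendsto (fun n : ℕ => Real.log n / Real.log (Nat.nth Nat.Prime n)) atTop (𝓝 1) := by
    have a1 : Tendsto (fun n : ℕ => Real.log ((n:ℝ) * Real.log (Nat.nth Nat.Prime n) / (Nat.nth Nat.Prime n)) / Real.log (Nat.nth Nat.Prime n)) atTop (𝓝 0) :=
      (h2.log one_ne_zero).div_atTop hlp
    have a2 : Tendsto (fun n : ℕ => Real.log (Real.log (Nat.nth Nat.Prime n)) / Real.log (Nat.nth Nat.Prime n)) atTop (𝓝 0) :=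
      (Real.isLittleO_log_id_atTop.tendsto_div_nhds_zero).comp hlp
    have := (a1.sub a2).const_add 1
    simp only [sub_zero, add_zero] at this
    refine this.congr' ?_
    filter_upwards [eventually_gt_atTop 0, hlp.eventually_gt_atTop 0] with n hn hl
    have hl' : 0 < Real.log (Nat.nth Nat.Prime n) := hl
    have hpp : (0:ℝ) < (Nat.nth Nat.Prime n) := by exact_mod_cast (Nat.prime_nth_prime n).pos
    have hn' : (0:ℝ) < n := by exact_mod_cast hn
    rw [Real.log_div (by positivity) hpp.ne', Real.log_mul hn'.ne' hl'.ne']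
    field_simp
    ring
  have := (h2.mul h3).inv₀ (by norm_num)
  simp only [mul_one, inv_one] at this
  refine this.congr' ?_
  filter_upwards [hlp.eventually_gt_atTop 0] with n hl
  have hl' : 0 < Real.log (Nat.nth Nat.Prime n) := hl
  have e : (n:ℝ) * Real.log (Nat.nth Nat.Prime n) / (Nat.nth Nat.Prime n) * (Real.log n / Real.log (Nat.nth Nat.Prime n)) = n * Real.log n / (Nat.nth Nat.Prime n) := by
    field_simp
  rw [e, inv_div]
end PNT


namespace PNT
open MeasureTheory Set Topology ArithmeticFunction Chebyshev
lemma B_tendsto : Tendsto B atTop (𝓝 1) := by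
  refine tauber (C := Real.log 4 + 4) (g := fun z => (G (1 + z) - 1) / (1 + z))
    B_meas B_nonneg B_le B_mono ?_ (fun z hz => B_lap hz)
  refine ContinuousOn.div ?_ (by fun_prop) ?_
  · refine (G_cont.comp (by fun_prop) ?_).sub continuousOn_const
    intro z hz
    simpa using hz
  · intro z hz h
    have := congrArg Complex.re h
    have hz' : 0 ≤ z.re := hz
    simp at this
    linarith

lemma psi_tendsto : Tendsto (fun x => psi x / x) atTop (𝓝 1) := by
  refine (B_tendsto.comp Real.tendsto_log_atTop).congr' ?_
  filter_upwards [eventually_gt_atTop 0] with x hx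
  simp only [Function.comp, B, Real.exp_neg, Real.exp_log hx, div_eq_mul_inv]
end PNT

theorem nth_prime_asymp :
    Tendsto (fun n : ℕ => (Nat.nth Nat.Prime n : ℝ) / (n * Real.log n))
      atTop (nhds 1) := by
  exact PNT.final_step PNT.psi_tendsto
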